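/- arXiv:1404.1598 — 2 statements merged into one kernel-verified Lean document; each statement's English description precedes it below -/
import Mathlib

section
/- The monoid Σ(X,P) is generated by the set S(X,P) ∪ ℬ ∪ 𝒞. -/
open Function Set

/-- The monoid (as a subset of `Function.End X`) of all transformations preserving
the partition induced by the equivalence relation `r`. -/
def TSet {X : Type*} (r : Setoid X) : Set (Function.End X) :=
  {f | ∀ x y : X, r x y → r (f x) (f y)}

/-- The group of units of `TSet r` (i.e. `S(X,P)`): the permutations `g` of `X` with
`x ∼ y ↔ g x ∼ g y`. -/
def SXP {X : Type*} (r : Setoid X) : Set (Function.End X) :=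
  {f | Function.Bijective f ∧ ∀ x y : X, r (f x) (f y) ↔ r x y}

/-- The submonoid (as a subset) of transformations preserving the partition whose
image meets every block of the partition. -/
def SigmaSet {X : Type*} (r : Setoid X) : Set (Function.End X) :=
  {f | f ∈ TSet r ∧ ∀ B ∈ Setoid.classes r, (Set.range f ∩ B).Nonempty}

/-- The number of blocks of the partition having size `s`. -/
noncomputable def blockCount {X : Type*} (r : Setoid X) (s : ℕ) : ℕ :=
  {B | B ∈ Setoid.classes r ∧ B.ncard = s}.ncard

/-- Membership in `ℬᵢ`, where `a = dᵢ` and `b = d_{i+1}` are consecutive distinct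
block sizes: `f ∈ Σ(X,P)`, and there are blocks `B, B'` of size `a` and `C, C'`
of size `b` such that `f` maps `B` injectively into `C`, maps `C'` onto `B'`, and
maps every other block bijectively onto a block of the same size. -/
def memB {X : Type*} (r : Setoid X) (a b : ℕ) (f : Function.End X) : Prop :=
  f ∈ SigmaSet r ∧
    ∃ B B' C C' : Set X,
      B ∈ Setoid.classes r ∧ B' ∈ Setoid.classes r ∧
      C ∈ Setoid.classes r ∧ C' ∈ Setoid.classes r ∧
      B.ncard = a ∧ B'.ncard = a ∧ C.ncard = b ∧ C'.ncard = b ∧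
      Set.InjOn f B ∧ f '' B ⊆ C ∧ f '' C' = B' ∧
      ∀ D ∈ Setoid.classes r, D ≠ B → D ≠ C' →
        ∃ E ∈ Setoid.classes r, f '' D = E ∧ Set.InjOn f D ∧ E.ncard = D.ncard

/-- Membership in `𝒞ᵢ`, where `s = dᵢ` is a block size: `f ∈ Σ(X,P)`, `f` maps
every block into a block of the same size, there is one block of size `s` whose
image under `f` has size `s - 1`, and `f` is injective on every other block. -/
def memC {X : Type*} (r : Setoid X) (s : ℕ) (f : Function.End X) : Prop :=
  f ∈ SigmaSet r ∧
    (∀ D ∈ Setoid.classes r, ∃ E ∈ Setoid.classes r, E.ncard = D.ncard ∧ f '' D ⊆ E) ∧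
    ∃ B ∈ Setoid.classes r, B.ncard = s ∧ (f '' B).ncard = s - 1 ∧
      ∀ D ∈ Setoid.classes r, D ≠ B → Set.InjOn f D

/-- `ℬ`: the union of the sets `ℬᵢ` for `1 ≤ i ≤ R − 1`. -/
def Bset {X : Type*} (r : Setoid X) (R : ℕ) (d : ℕ → ℕ) : Set (Function.End X) :=
  {f | ∃ i, 1 ≤ i ∧ i + 1 ≤ R ∧ memB r (d i) (d (i + 1)) f}

/-- `𝒞`: the union of the sets `𝒞ᵢ` for `1 ≤ i ≤ R`. -/
def Cset {X : Type*} (r : Setoid X) (R : ℕ) (d : ℕ → ℕ) : Set (Function.End X) :=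
  {f | ∃ i, 1 ≤ i ∧ i ≤ R ∧ memC r (d i) f}

/-- The block of `y`. -/
def blk {X : Type*} (r : Setoid X) (y : X) : Set X := {x | r x y}

/-- The size of the block of `y`. -/
noncomputable def bsz {X : Type*} (r : Setoid X) (y : X) : ℕ := (blk r y).ncard

lemma mem_blk {X : Type*} {r : Setoid X} {x y : X} : x ∈ blk r y ↔ r x y := Iff.rfl

lemma blk_mem {X : Type*} (r : Setoid X) (y : X) : blk r y ∈ Setoid.classes r := ⟨y, rfl⟩

lemma blk_congr {X : Type*} {r : Setoid X} {x y : X} (h : r x y) : blk r x = blk r y := by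
  ext z
  exact ⟨fun hz => r.trans hz h, fun hz => r.trans hz (r.symm h)⟩

lemma bsz_congr {X : Type*} {r : Setoid X} {x y : X} (h : r x y) : bsz r x = bsz r y := by
  unfold bsz; rw [blk_congr h]

lemma mem_sigma {X : Type*} {r : Setoid X} {f : Function.End X} :
    f ∈ SigmaSet r ↔ (∀ x y, r x y → r (f x) (f y)) ∧ ∀ y, ∃ x, r (f x) y := by
  constructor
  · rintro ⟨h1, h2⟩
    refine ⟨h1, fun y => ?_⟩
    obtain ⟨_, ⟨x, rfl⟩, hx⟩ := h2 _ (blk_mem r y)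
    exact ⟨x, hx⟩
  · rintro ⟨h1, h2⟩
    refine ⟨h1, ?_⟩
    rintro B ⟨y, rfl⟩
    obtain ⟨x, hx⟩ := h2 y
    exact ⟨f x, ⟨x, rfl⟩, hx⟩

/-- The map induced on blocks. -/
def qmap {X : Type*} {r : Setoid X} (f : Function.End X) (hf : f ∈ SigmaSet r) :
    Quotient r → Quotient r := Quotient.map f (fun x y h => hf.1 x y h)

lemma qmap_surj {X : Type*} {r : Setoid X} (f : Function.End X) (hf : f ∈ SigmaSet r) :
    Function.Surjective (qmap f hf) := by
  intro c
  induction c using Quotient.inductionOn with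
  | h y =>
    obtain ⟨x, hx⟩ := (mem_sigma.1 hf).2 y
    exact ⟨⟦x⟧, Quotient.sound hx⟩

lemma qmap_bij {X : Type*} [Finite X] {r : Setoid X} (f : Function.End X)
    (hf : f ∈ SigmaSet r) : Function.Bijective (qmap f hf) :=
  Finite.surjective_iff_bijective.1 (qmap_surj f hf)

lemma sigma_inj {X : Type*} [Finite X] {r : Setoid X} {f : Function.End X}
    (hf : f ∈ SigmaSet r) {x y : X} (h : r (f x) (f y)) : r x y := by
  have : qmap f hf ⟦x⟧ = qmap f hf ⟦y⟧ := Quotient.sound h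
  exact Quotient.exact ((qmap_bij f hf).1 this)

/-- If no block is mapped to a smaller one, then all sizes are preserved. -/
lemma size_eq_of_le {X : Type*} [Finite X] {r : Setoid X} {f : Function.End X}
    (hf : f ∈ SigmaSet r) (h : ∀ x, bsz r x ≤ bsz r (f x)) (x : X) :
    bsz r (f x) = bsz r x := by
  classical
  have := Fintype.ofFinite (Quotient r)
  let N : Quotient r → ℕ := Quotient.lift (bsz r) (fun _ _ h => bsz_congr h)
  have hle : ∀ c ∈ Finset.univ, N c ≤ N (qmap f hf c) := by
    intro c _
    induction c using Quotient.inductionOn with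
    | h y => exact h y
  have hs : ∑ c, N c = ∑ c, N (qmap f hf c) :=
    ((qmap_bij f hf).sum_comp N).symm
  exact ((Finset.sum_eq_sum_iff_of_le hle).1 hs ⟦x⟧ (Finset.mem_univ _)).symm

/-- Factoring a map through an intermediate set. -/
lemma factor_lemma {X Y : Type*} [Finite X] (f : X → Y) (P Q : Set X)
    (h1 : (f '' P).ncard ≤ Q.ncard) (h2 : Q.ncard ≤ P.ncard) :
    ∃ j s : X → X, (∀ x ∈ Q, j x ∈ P) ∧ (∀ x ∈ P, s x ∈ Q) ∧ (∀ x ∈ Q, s (j x) = x) ∧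
      (∀ x ∈ P, f (j (s x)) = f x) := by
  classical
  obtain ⟨T, hTP, hT⟩ := Set.exists_subset_bijOn P f
  have hTc : T.ncard ≤ Q.ncard := by
    rw [← hT.image_eq, hT.injOn.ncard_image] at h1
    exact h1
  obtain ⟨U, hTU, hUP, hU⟩ := Set.exists_subsuperset_card_eq hTP hTc h2
  have e : U ≃ Q := Classical.choice (Finite.card_eq.1 (by
    simpa [Nat.card_coe_set_eq] using hU))
  have ht : ∀ x, ∃ t, x ∈ P → t ∈ U ∧ f t = f x := by
    intro x
    by_cases hx : x ∈ P
    · obtain ⟨t, ht, h⟩ := hT.surjOn (Set.mem_image_of_mem f hx)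
      exact ⟨t, fun _ => ⟨hTU ht, h⟩⟩
    · exact ⟨x, fun h => absurd h hx⟩
  choose t ht using ht
  let ρ : X → X := fun x => if x ∈ U then x else t x
  have hρ : ∀ x ∈ P, ρ x ∈ U ∧ f (ρ x) = f x := by
    intro x hx
    by_cases hxU : x ∈ U
    · simp [ρ, hxU]
    · simpa [ρ, hxU] using ht x hx
  have hρU : ∀ x ∈ U, ρ x = x := fun x hx => by simp [ρ, hx]
  refine ⟨fun x => if h : x ∈ Q then (e.symm ⟨x, h⟩ : X) else x,
    fun x => if h : ρ x ∈ U then (e ⟨ρ x, h⟩ : X) else x, ?_, ?_, ?_, ?_⟩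
  · intro x hx
    simp only [hx, dif_pos]
    exact hUP (e.symm ⟨x, hx⟩).2
  · intro x hx
    simp only [(hρ x hx).1, dif_pos]
    exact (e _).2
  · intro x hx
    simp only [hx, dif_pos]
    have h := hρU _ (e.symm ⟨x, hx⟩).2
    simp [h]
  · intro x hx
    simp only [(hρ x hx).1, dif_pos]
    simp [(hρ x hx).2]

/-- The submonoid `Σ(X,P)`. -/
def sigmaMon {X : Type*} (r : Setoid X) : Submonoid (Function.End X) where
  carrier := SigmaSet r
  one_mem' := mem_sigma.2 ⟨fun _ _ h => h, fun y => ⟨y, r.refl y⟩⟩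
  mul_mem' := by
    intro f g hf hg
    rw [mem_sigma] at *
    refine ⟨fun x y h => hf.1 _ _ (hg.1 _ _ h), fun y => ?_⟩
    obtain ⟨x, hx⟩ := hf.2 y
    obtain ⟨z, hz⟩ := hg.2 x
    exact ⟨z, r.trans (hf.1 _ _ hz) hx⟩

lemma SXP_sub {X : Type*} (r : Setoid X) : SXP r ⊆ SigmaSet r := by
  rintro f ⟨h1, h2⟩
  refine mem_sigma.2 ⟨fun x y h => (h2 x y).2 h, fun y => ?_⟩
  obtain ⟨x, rfl⟩ := h1.2 y
  exact ⟨x, r.refl _⟩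

/-- Size-preserving maps are generated by `S(X,P)` and the elementary collapses. -/
lemma size_pres_mem {X : Type*} [Finite X] {r : Setoid X} (M : Submonoid (Function.End X))
    (hS : SXP r ⊆ M) (hC : ∀ x f, memC r (bsz r x) f → f ∈ M) (k : ℕ) :
    ∀ f : Function.End X, f ∈ SigmaSet r → (∀ x, bsz r (f x) = bsz r x) →
      Nat.card X - (Set.range f).ncard ≤ k → f ∈ M := by
  classical
  induction k with
  | zero =>
    intro f hf hsz hk
    have hle : Nat.card X ≤ (Set.range f).ncard := by omega
    have hr : Set.range f = Set.univ :=
      Set.eq_of_subset_of_ncard_le (Set.subset_univ _) (by rwa [Set.ncard_univ])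
    have hsurj : Function.Surjective f := Set.range_eq_univ.1 hr
    exact hS ⟨Finite.surjective_iff_bijective.1 hsurj,
      fun x y => ⟨sigma_inj hf, (mem_sigma.1 hf).1 x y⟩⟩
  | succ k ih =>
    intro f hf hsz hk
    by_cases hinj : Function.Injective f
    · exact hS ⟨Finite.injective_iff_bijective.1 hinj,
        fun x y => ⟨sigma_inj hf, (mem_sigma.1 hf).1 x y⟩⟩
    have hinj' : ∃ x y, f x = f y ∧ x ≠ y := by
      simpa [Function.Injective] using hinj
    obtain ⟨x, y, hxy, hne⟩ := hinj'
    have hf' := mem_sigma.1 hf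
    have hrxy : r x y := sigma_inj hf (by rw [hxy])
    -- a missed point
    have hz : ∃ z, r z (f x) ∧ z ∉ Set.range f := by
      by_contra hcon
      push Not at hcon
      have hsub : blk r (f x) ⊆ f '' (blk r x \ {x}) := by
        intro z hz
        obtain ⟨w, rfl⟩ := hcon z hz
        have hw : r w x := sigma_inj hf hz
        by_cases hwx : w = x
        · exact ⟨y, ⟨r.symm hrxy, fun h => hne h.symm⟩, by rw [hwx, hxy]⟩
        · exact ⟨w, ⟨hw, hwx⟩, rfl⟩
      have h1 : (blk r (f x)).ncard ≤ (blk r x \ {x}).ncard :=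
        (Set.ncard_le_ncard hsub).trans (Set.ncard_image_le)
      have h2 : (blk r x \ {x}).ncard < (blk r x).ncard :=
        Set.ncard_sdiff_singleton_lt_of_mem (r.refl x)
      have := hsz x
      unfold bsz at this
      omega
    obtain ⟨z, hz, hzr⟩ := hz
    obtain ⟨g, gx, ga⟩ : ∃ g : Function.End X, g x = z ∧ ∀ a, a ≠ x → g a = f a :=
      ⟨fun a => if a = x then z else f a, if_pos rfl, fun a ha => if_neg ha⟩
    obtain ⟨e, ex, ea⟩ : ∃ e : Function.End X, e x = y ∧ ∀ a, a ≠ x → e a = a :=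
      ⟨fun a => if a = x then y else a, if_pos rfl, fun a ha => if_neg ha⟩
    have hgf : ∀ a, r (g a) (f a) := by
      intro a
      by_cases ha : a = x
      · rw [ha, gx]; exact hz
      · rw [ga a ha]
    have hei : ∀ a, r (e a) a := by
      intro a
      by_cases ha : a = x
      · rw [ha, ex]; exact r.symm hrxy
      · rw [ea a ha]
    have hge : f = g * e := by
      funext a
      change f a = g (e a)
      by_cases ha : a = x
      · rw [ha, ex, ga y hne.symm, hxy]
      · rw [ea a ha, ga a ha]
    have hgS : g ∈ SigmaSet r := by
      refine mem_sigma.2 ⟨fun a b h => r.trans (hgf a)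
        (r.trans (hf'.1 a b h) (r.symm (hgf b))), fun b => ?_⟩
      obtain ⟨a, ha⟩ := hf'.2 b
      exact ⟨a, r.trans (hgf a) ha⟩
    have heS : e ∈ SigmaSet r := by
      refine mem_sigma.2 ⟨fun a b h => r.trans (hei a)
        (r.trans h (r.symm (hei b))), fun b => ⟨b, hei b⟩⟩
    have hrange : insert z (Set.range f) ⊆ Set.range g := by
      intro b hb
      rcases hb with rfl | ⟨a, rfl⟩
      · exact ⟨x, gx⟩
      · by_cases ha : a = x
        · exact ⟨y, by rw [ga y hne.symm, ha, hxy]⟩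
        · exact ⟨a, ga a ha⟩
    have hrc : (Set.range f).ncard + 1 ≤ (Set.range g).ncard := by
      rw [← Set.ncard_insert_of_notMem hzr]
      exact Set.ncard_le_ncard hrange
    have hgM : g ∈ M := ih g hgS (fun a => by rw [bsz_congr (hgf a), hsz a]) (by omega)
    have heM : e ∈ M := by
      refine hC x e ⟨heS, ?_, blk r x, blk_mem r x, rfl, ?_, ?_⟩
      · rintro D ⟨w, rfl⟩
        refine ⟨_, blk_mem r w, rfl, ?_⟩
        rintro _ ⟨a, ha, rfl⟩
        exact r.trans (hei a) ha
      · have him : e '' blk r x = blk r x \ {x} := by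
          ext b
          constructor
          · rintro ⟨a, ha, rfl⟩
            refine ⟨r.trans (hei a) ha, ?_⟩
            by_cases hax : a = x
            · rw [hax, ex]; exact hne.symm
            · rw [ea a hax]; exact hax
          · rintro ⟨hb, hbx⟩
            exact ⟨b, hb, ea b hbx⟩
        rw [him, Set.ncard_sdiff_singleton_of_mem (mem_blk.2 (r.refl x))]
        rfl
      · rintro D ⟨w, rfl⟩ hD a ha b hb hab
        have key : ∀ c, r c w → c ≠ x := by
          rintro c hc rfl
          exact hD (blk_congr (r.symm hc))
        rwa [ea a (key a ha), ea b (key b hb)] at hab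
    rw [hge]
    exact M.mul_mem hgM heM

/-- A swap step. -/
lemma swap_step {X : Type*} [Fintype X] {r : Setoid X} {f : Function.End X}
    (hf : f ∈ SigmaSet r) {p q : X} (hqp : bsz r q < bsz r p)
    (hfp : bsz r (f p) ≤ bsz r q) (hlt : bsz r (f p) < bsz r (f q)) :
    ∃ b : Function.End X, memB r (bsz r q) (bsz r p) b ∧ f = f * b * b ∧
      ∑ x, bsz r (f x) < ∑ x, bsz r ((f * b) x) := by
  classical
  have hf' := mem_sigma.1 hf
  have hnr : ¬ r p q := fun h => by have := bsz_congr h; omega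
  have himg : (f '' blk r p).ncard ≤ (blk r q).ncard := by
    refine le_trans (Set.ncard_le_ncard ?_) hfp
    rintro _ ⟨a, ha, rfl⟩
    exact hf'.1 _ _ ha
  obtain ⟨j, s, hj, hs, hsj, hjs⟩ := factor_lemma f (blk r p) (blk r q) himg hqp.le
  have hdisj : ∀ x, r x p → ¬ r x q := fun x h1 h2 => hnr (r.trans (r.symm h1) h2)
  let b : Function.End X := fun x => if r x p then s x else if r x q then j x else x
  have bp : ∀ x, r x p → b x = s x := fun x h => by simp [b, h]
  have bq : ∀ x, r x q → b x = j x := fun x h => by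
    have : ¬ r x p := fun h' => hdisj x h' h
    simp [b, h, this]
  have bo : ∀ x, ¬ r x p → ¬ r x q → b x = x := fun x h h' => by simp [b, h, h']
  have bpq : ∀ x, r x p → r (b x) q := fun x h => by rw [bp x h]; exact hs x h
  have bqp : ∀ x, r x q → r (b x) p := fun x h => by rw [bq x h]; exact hj x h
  have hbT : ∀ x y, r x y → r (b x) (b y) := by
    intro x y h
    by_cases h1 : r y p
    · exact r.trans (bpq x (r.trans h h1)) (r.symm (bpq y h1))
    by_cases h2 : r y q
    · exact r.trans (bqp x (r.trans h h2)) (r.symm (bqp y h2))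
    rw [bo y h1 h2, bo x (fun h' => h1 (r.trans (r.symm h) h'))
      (fun h' => h2 (r.trans (r.symm h) h'))]
    exact h
  have hbS : b ∈ SigmaSet r := by
    refine mem_sigma.2 ⟨hbT, fun y => ?_⟩
    by_cases h1 : r y p
    · exact ⟨q, r.trans (bqp q (r.refl q)) (r.symm h1)⟩
    by_cases h2 : r y q
    · exact ⟨p, r.trans (bpq p (r.refl p)) (r.symm h2)⟩
    exact ⟨y, by rw [bo y h1 h2]⟩
  refine ⟨b, ⟨hbS, blk r q, blk r q, blk r p, blk r p, blk_mem r q, blk_mem r q, blk_mem r p,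
    blk_mem r p, rfl, rfl, rfl, rfl, ?_, ?_, ?_, ?_⟩, ?_, ?_⟩
  · intro x hx y hy hxy
    rw [bq x hx, bq y hy] at hxy
    rw [← hsj x hx, ← hsj y hy, hxy]
  · rintro _ ⟨x, hx, rfl⟩
    exact bqp x hx
  · ext y
    constructor
    · rintro ⟨x, hx, rfl⟩
      exact bpq x hx
    · intro hy
      exact ⟨j y, hj y hy, by rw [bp _ (hj y hy), hsj y hy]⟩
  · rintro D ⟨w, rfl⟩ h1 h2
    have key : ∀ c, r c w → b c = c := by
      intro c hc
      refine bo c (fun h => h2 ?_) (fun h => h1 ?_)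
      · exact blk_congr (r.trans (r.symm hc) h)
      · exact blk_congr (r.trans (r.symm hc) h)
    refine ⟨_, blk_mem r w, ?_, ?_, rfl⟩
    · ext c
      constructor
      · rintro ⟨a, ha, rfl⟩
        rw [key a ha]; exact ha
      · intro hc
        exact ⟨c, hc, key c hc⟩
    · intro x hx y hy hxy
      rwa [key x hx, key y hy] at hxy
  · funext x
    change f x = f (b (b x))
    by_cases h1 : r x p
    · rw [bq _ (bpq x h1), bp x h1, hjs x h1]
    by_cases h2 : r x q
    · rw [bp _ (bqp x h2), bq x h2, hsj x h2]
    rw [bo x h1 h2, bo x h1 h2]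
  · change ∑ x, bsz r (f x) < ∑ x, bsz r (f (b x))
    have hP : ∀ x, r x p → bsz r (f x) = bsz r (f p) := fun x h => bsz_congr (hf'.1 _ _ h)
    have hQ : ∀ x, r x q → bsz r (f x) = bsz r (f q) := fun x h => bsz_congr (hf'.1 _ _ h)
    obtain ⟨α, hα⟩ : ∃ α, bsz r (f q) = bsz r (f p) + α := ⟨_, (Nat.add_sub_of_le hlt.le).symm⟩
    have hpt : ∀ x, bsz r (f (b x)) + (if r x q then α else 0)
        = bsz r (f x) + (if r x p then α else 0) := by
      intro x
      by_cases h1 : r x p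
      · simp only [h1, hdisj x h1, if_true, if_false]
        rw [hQ _ (bpq x h1), hP x h1, hα]; rfl
      by_cases h2 : r x q
      · simp only [h1, h2, if_true, if_false]
        rw [hP _ (bqp x h2), hQ x h2, hα]; rfl
      simp only [h1, h2, if_false, bo x h1 h2]
    have hsum := Finset.sum_congr (rfl : (Finset.univ : Finset X) = Finset.univ)
      (fun x _ => hpt x)
    rw [Finset.sum_add_distrib, Finset.sum_add_distrib] at hsum
    have hcount : ∀ y, ∑ x, (if r x y then α else 0) = bsz r y * α := by
      intro y
      rw [← Finset.sum_filter, Finset.sum_const, smul_eq_mul]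
      congr 1
      unfold bsz
      rw [← Set.ncard_coe_finset]
      congr 1
      ext x; simp [mem_blk]
    rw [hcount, hcount] at hsum
    have hα0 : 0 < α := by omega
    have := Nat.mul_lt_mul_of_pos_right hqp hα0
    omega

/-- Choice of the adjacent pair. -/
lemma exists_pair {X : Type*} [Finite X] {r : Setoid X} {f : Function.End X}
    (R : ℕ) (d : ℕ → ℕ)
    (hdmono : ∀ i, 1 ≤ i → i + 1 ≤ R → d i < d (i + 1))
    (hdx : ∀ x, ∃ i, 1 ≤ i ∧ i ≤ R ∧ d i = bsz r x)
    (hxd : ∀ i, 1 ≤ i → i ≤ R → ∃ x, bsz r x = d i)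
    (hf : f ∈ SigmaSet r) (hdown : ∃ x, bsz r (f x) < bsz r x) :
    ∃ p q i, 1 ≤ i ∧ i + 1 ≤ R ∧ bsz r q = d i ∧ bsz r p = d (i + 1) ∧
      bsz r (f p) ≤ bsz r q ∧ bsz r (f p) < bsz r (f q) := by
  classical
  have hmono : ∀ a b, 1 ≤ a → a ≤ b → b ≤ R → d a ≤ d b := by
    intro a b ha hab
    induction b, hab using Nat.le_induction with
    | base => intro _; exact le_rfl
    | succ n hn ih =>
      intro h
      exact (ih (by omega)).trans (hdmono n (by omega) h).le
  obtain ⟨p, hp, hmin⟩ : ∃ p, bsz r (f p) < bsz r p ∧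
      ∀ x, bsz r (f x) < bsz r x → bsz r p ≤ bsz r x := by
    obtain ⟨p, hp, hmin⟩ := Set.exists_min_image {x | bsz r (f x) < bsz r x} (bsz r)
      (Set.toFinite _) hdown
    exact ⟨p, hp, hmin⟩
  obtain ⟨i', hi1, hiR, hi⟩ := hdx p
  obtain ⟨k, hk1, hkR, hk⟩ := hdx (f p)
  have hki : k < i' := by
    by_contra h
    have := hmono i' k hi1 (by omega) hkR
    omega
  obtain ⟨i, rfl⟩ : ∃ i, i' = i + 1 := ⟨i' - 1, by omega⟩
  have hfp : bsz r (f p) ≤ d i := by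
    rw [← hk]; exact hmono k i hk1 (by omega) (by omega)
  have hlt := hdmono i (by omega) hiR
  suffices h : ∃ q, bsz r q = d i ∧ bsz r (f p) < bsz r (f q) by
    obtain ⟨q, hq, hq'⟩ := h
    exact ⟨p, q, i, by omega, hiR, hq, hi.symm, by omega, hq'⟩
  by_contra hcon
  push Not at hcon
  have hstay : ∀ q, bsz r q = d i → bsz r (f q) = d i ∧ bsz r (f p) = d i := by
    intro q hq
    have h1 := hcon q hq
    have h2 : ¬ bsz r (f q) < bsz r q := fun h => by
      have := hmin q h
      omega
    omega
  obtain ⟨q0, hq0⟩ := hxd i (by omega) (by omega)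
  have hfpd := (hstay q0 hq0).2
  have := Fintype.ofFinite (Quotient r)
  let N : Quotient r → ℕ := Quotient.lift (bsz r) (fun _ _ h => bsz_congr h)
  let S : Finset (Quotient r) := Finset.univ.filter (fun c => N c = d i)
  have hsub : S.image (qmap f hf) ⊆ S := by
    intro c hc
    obtain ⟨c', hc', rfl⟩ := Finset.mem_image.1 hc
    induction c' using Quotient.inductionOn with
    | h y =>
      have hy : bsz r y = d i := (Finset.mem_filter.1 hc').2
      exact Finset.mem_filter.2 ⟨Finset.mem_univ _, (hstay y hy).1⟩
  have heq : S.image (qmap f hf) = S :=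
    Finset.eq_of_subset_of_card_le hsub
      (Finset.card_image_of_injective _ (qmap_bij f hf).1).ge
  have hmem : (⟦f p⟧ : Quotient r) ∈ S := Finset.mem_filter.2 ⟨Finset.mem_univ _, hfpd⟩
  rw [← heq] at hmem
  obtain ⟨c, hc, hcp⟩ := Finset.mem_image.1 hmem
  have hcp' : c = ⟦p⟧ := (qmap_bij f hf).1 hcp
  subst hcp'
  have : bsz r p = d i := (Finset.mem_filter.1 hc).2
  omega

/-- (Here `d 1 < … < d R` are the distinct block sizes of the
partition.)  The monoid `Σ(X,P)` is generated by `S(X,P) ∪ ℬ ∪ 𝒞`. -/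
theorem SigmaXP_generated {X : Type*} [Fintype X] [Nonempty X] (r : Setoid X)
    (R : ℕ) (d : ℕ → ℕ)
    (hdmono : ∀ i, 1 ≤ i → i + 1 ≤ R → d i < d (i + 1))
    (hdsizes : ∀ s, blockCount r s ≠ 0 ↔ ∃ i, 1 ≤ i ∧ i ≤ R ∧ d i = s)
    : (Submonoid.closure (SXP r ∪ Bset r R d ∪ Cset r R d) : Set (Function.End X))
        = SigmaSet r := by
  classical
  have hx : ∀ s, blockCount r s ≠ 0 ↔ ∃ x, bsz r x = s := by
    intro s
    unfold blockCount
    rw [← Nat.pos_iff_ne_zero, Set.ncard_pos]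
    constructor
    · rintro ⟨B, ⟨y, rfl⟩, h⟩
      exact ⟨y, h⟩
    · rintro ⟨y, h⟩
      exact ⟨blk r y, blk_mem r y, h⟩
  have hdx : ∀ x, ∃ i, 1 ≤ i ∧ i ≤ R ∧ d i = bsz r x := fun x =>
    (hdsizes _).1 ((hx _).2 ⟨x, rfl⟩)
  have hxd : ∀ i, 1 ≤ i → i ≤ R → ∃ x, bsz r x = d i := fun i h1 h2 =>
    (hx _).1 ((hdsizes _).2 ⟨i, h1, h2, rfl⟩)
  apply Set.Subset.antisymm
  · have : Submonoid.closure (SXP r ∪ Bset r R d ∪ Cset r R d) ≤ sigmaMon r := by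
      rw [Submonoid.closure_le]
      rintro f ((h | ⟨i, _, _, h⟩) | ⟨i, _, _, h⟩)
      · exact SXP_sub r h
      · exact h.1
      · exact h.1
    exact this
  · set M := Submonoid.closure (SXP r ∪ Bset r R d ∪ Cset r R d) with hM
    have hS : SXP r ⊆ M := fun f h => Submonoid.subset_closure (Or.inl (Or.inl h))
    have hC : ∀ x f, memC r (bsz r x) f → f ∈ M := by
      intro x f h
      obtain ⟨i, h1, h2, h3⟩ := hdx x
      exact Submonoid.subset_closure (Or.inr ⟨i, h1, h2, by rwa [h3]⟩)
    have hbound : ∀ f : Function.End X,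
        ∑ x, bsz r (f x) ≤ Fintype.card X * Fintype.card X := by
      intro f
      have : ∀ x ∈ (Finset.univ : Finset X), bsz r (f x) ≤ Fintype.card X := by
        intro x _
        have h := Set.ncard_le_ncard (Set.subset_univ (blk r (f x)))
        rwa [Set.ncard_univ, Nat.card_eq_fintype_card] at h
      simpa using Finset.sum_le_card_nsmul _ _ _ this
    have main : ∀ k : ℕ, ∀ f : Function.End X, f ∈ SigmaSet r →
        Fintype.card X * Fintype.card X - ∑ x, bsz r (f x) ≤ k → f ∈ M := by
      intro k
      induction k using Nat.strong_induction_on with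
      | _ k ih =>
        intro f hf hk
        by_cases hdown : ∃ x, bsz r (f x) < bsz r x
        · obtain ⟨p, q, i, h1, h2, hq, hp, hle, hlt⟩ :=
            exists_pair R d hdmono hdx hxd hf hdown
          have hqp : bsz r q < bsz r p := by rw [hq, hp]; exact hdmono i h1 h2
          obtain ⟨b, hb, hfb, hsum⟩ := swap_step hf hqp hle hlt
          have hbM : b ∈ M := Submonoid.subset_closure
            (Or.inl (Or.inr ⟨i, h1, h2, by rwa [← hq, ← hp]⟩))
          have hbd := hbound (f * b)
          have hg : f * b ∈ M :=
            ih (Fintype.card X * Fintype.card X - ∑ x, bsz r ((f * b) x)) (by omega) (f * b)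
              ((sigmaMon r).mul_mem hf hb.1) le_rfl
          rw [hfb]
          exact M.mul_mem hg hbM
        · push Not at hdown
          exact size_pres_mem M hS hC _ f hf (size_eq_of_le hf hdown) le_rfl
    intro f hf
    exact main _ f hf le_rfl
end

section
/- The relative rank of Σ(X,P) modulo S(X,P) equals p + q + g'(t) − 1 + l. -/
open Function Set

/-- The relative rank `rank(A : U)` of the monoid given by the subset `A` of `M`
modulo the subset `U`: the least cardinality of a set `W ⊆ A` such that `U ∪ W`
generates `A`. -/
noncomputable def relRank {M : Type*} [Monoid M] (A U : Set M) : ℕ :=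
  sInf {k | ∃ W : Set M, W ⊆ A ∧ W.Finite ∧ W.ncard = k ∧
    (Submonoid.closure (U ∪ W) : Set M) = A}

/-- `g'(0) = 0` and `g'(t) = 1` for `t ≥ 1`. -/
def gg' (t : ℕ) : ℕ := if 1 ≤ t then 1 else 0

set_option linter.unusedSectionVars false

namespace RelRankAux

variable {X Q : Type*} [Fintype X] [Fintype Q] [DecidableEq X] [DecidableEq Q]

/-- size of a fibre -/
noncomputable def sz (q : X → Q) (b : Q) : ℕ := (q ⁻¹' {b}).ncard

/-- `f` lies over the permutation `π` of the blocks. -/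
def Over (q : X → Q) (π : Equiv.Perm Q) (f : Function.End X) : Prop :=
  ∀ x, q (f x) = π (q x)

/-- the monoid `Σ` -/
def Sig (q : X → Q) : Submonoid (Function.End X) where
  carrier := {f | ∃ π, Over q π f}
  one_mem' := ⟨1, fun _ => rfl⟩
  mul_mem' := by
    rintro f g ⟨π, hf⟩ ⟨ρ, hg⟩
    refine ⟨π * ρ, fun x => ?_⟩
    change q (f (g x)) = π (ρ (q x))
    rw [hf, hg]

/-- the group of units -/
def Un (q : X → Q) : Submonoid (Function.End X) where
  carrier := {f | Function.Bijective f ∧ ∃ π, Over q π f}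
  one_mem' := ⟨Function.bijective_id, (Sig q).one_mem⟩
  mul_mem' := by
    rintro f g ⟨h1, hf⟩ ⟨h2, hg⟩
    exact ⟨h1.comp h2, (Sig q).mul_mem hf hg⟩

/-- size preserving elements -/
def SP (q : X → Q) : Submonoid (Function.End X) where
  carrier := {f | ∃ π, Over q π f ∧ ∀ b, sz q (π b) = sz q b}
  one_mem' := ⟨1, fun _ => rfl, fun _ => rfl⟩
  mul_mem' := by
    rintro f g ⟨π, hf, h1⟩ ⟨ρ, hg, h2⟩
    refine ⟨π * ρ, fun x => ?_, fun b => ?_⟩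
    · change q (f (g x)) = π (ρ (q x))
      rw [hf, hg]
    · change sz q (π (ρ b)) = _
      rw [h1, h2]

/-- the basic swap of two blocks -/
def DF (q : X → Q) (A B : Q) (d : Function.End X) : Prop :=
  Over q (Equiv.swap A B) d ∧ (∀ x, q x ≠ A → q x ≠ B → d x = x) ∧ ∀ x, q x = A → d (d x) = x

theorem perm_eq_of_le (s : Q → ℕ) (π : Equiv.Perm Q) (h : ∀ b, s b ≤ s (π b)) (b : Q) :
    s (π b) = s b := by
  have h1 : ∑ b, s b = ∑ b, s (π b) := (Equiv.sum_comp π s).symm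
  have := (Finset.sum_eq_sum_iff_of_le (fun i _ => h i)).1 h1 b (Finset.mem_univ b)
  exact this.symm

theorem over_unique {q : X → Q} (hq : Function.Surjective q) {π ρ : Equiv.Perm Q}
    {f : Function.End X} (h1 : Over q π f) (h2 : Over q ρ f) : π = ρ := by
  ext b
  obtain ⟨x, rfl⟩ := hq b
  rw [← h1, ← h2]

theorem sz_pos {q : X → Q} (hq : Function.Surjective q) (b : Q) : 0 < sz q b := by
  obtain ⟨x, hx⟩ := hq b
  exact (Set.ncard_pos (Set.toFinite _)).2 ⟨x, hx⟩

theorem image_sub {q : X → Q} {π : Equiv.Perm Q} {f : Function.End X} (h : Over q π f) (b : Q) :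
    f '' (q ⁻¹' {b}) ⊆ q ⁻¹' {π b} := by
  rintro _ ⟨x, hx, rfl⟩
  have hx : q x = b := hx
  change q (f x) = π b
  rw [h, hx]

theorem sz_le_of_inj {q : X → Q} {π : Equiv.Perm Q} {f : Function.End X} (h : Over q π f) (b : Q)
    (hi : Set.InjOn f (q ⁻¹' {b})) : sz q b ≤ sz q (π b) := by
  unfold sz
  rw [← hi.ncard_image]
  exact Set.ncard_le_ncard (image_sub h b) (Set.toFinite _)

theorem inj_of_fib {q : X → Q} {π : Equiv.Perm Q} {f : Function.End X} (h : Over q π f)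
    (hi : ∀ b, Set.InjOn f (q ⁻¹' {b})) : Function.Injective f := by
  intro x y hxy
  have : q x = q y := π.injective (by rw [← h, ← h, hxy])
  exact hi (q y) this rfl hxy

theorem un_of_inj {q : X → Q} {π : Equiv.Perm Q} {f : Function.End X} (h : Over q π f)
    (hi : Function.Injective f) : f ∈ Un q :=
  ⟨Finite.injective_iff_bijective.1 hi, π, h⟩

theorem un_le_sp (q : X → Q) : Un q ≤ SP q := by
  rintro f ⟨hb, π, h⟩
  exact ⟨π, h, perm_eq_of_le _ π fun b => sz_le_of_inj h b hb.1.injOn⟩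

theorem sp_le_sig (q : X → Q) : SP q ≤ Sig q := by
  rintro f ⟨π, h, _⟩
  exact ⟨π, h⟩

/-! ### Lower bound -/

/-- injective off one block of size `s`, of rank at least `c` on that block -/
def QQ (q : X → Q) (s c : ℕ) (f : Function.End X) : Prop :=
  ∃ B, sz q B = s ∧ (∀ b, b ≠ B → Set.InjOn f (q ⁻¹' {b})) ∧ c ≤ (f '' (q ⁻¹' {B})).ncard

theorem QQ_right {q : X → Q} {s c : ℕ} {f g : Function.End X} (h : QQ q s c (f * g)) :
    QQ q s c g := by
  obtain ⟨B, hB, hi, hc⟩ := h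
  refine ⟨B, hB, fun b hb x hx y hy hxy => hi b hb hx hy (congrArg f hxy), hc.trans ?_⟩
  have : (f * g) '' (q ⁻¹' {B}) = f '' (g '' (q ⁻¹' {B})) := Set.image_comp f g _
  rw [this]
  exact Set.ncard_image_le (Set.toFinite _)

theorem QQ_left {q : X → Q} {s c : ℕ} {f g : Function.End X} (h : QQ q s c (f * g))
    (hg : g ∈ SP q) : QQ q s c f := by
  obtain ⟨B, hB, hi, hc⟩ := h
  obtain ⟨π, hπ, hs⟩ := hg
  refine ⟨π B, (hs B).trans hB, fun b hb => ?_, hc.trans ?_⟩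
  · have hb' : π.symm b ≠ B := fun h => hb (by rw [← h]; simp)
    have hgi : Set.InjOn g (q ⁻¹' {π.symm b}) := fun x hx y hy hxy =>
      hi _ hb' hx hy (congrArg f hxy)
    have himg : g '' (q ⁻¹' {π.symm b}) = q ⁻¹' {b} := by
      have h1 := image_sub hπ (π.symm b)
      rw [Equiv.apply_symm_apply] at h1
      refine Set.eq_of_subset_of_ncard_le h1 ?_ (Set.toFinite _)
      rw [hgi.ncard_image]
      have := hs (π.symm b)
      rw [Equiv.apply_symm_apply] at this
      exact this.le
    rw [← himg]
    rintro _ ⟨x, hx, rfl⟩ _ ⟨y, hy, rfl⟩ hxy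
    rw [hi _ hb' hx hy hxy]
  · have : (f * g) '' (q ⁻¹' {B}) = f '' (g '' (q ⁻¹' {B})) := Set.image_comp f g _
    rw [this]
    exact Set.ncard_le_ncard (Set.image_mono (image_sub hπ B)) (Set.toFinite _)

theorem exists_gen {q : X → Q} {s c : ℕ} (H : Submonoid (Function.End X)) (hH : H ≤ SP q)
    (hU : Un q ≤ H) (W : Set (Function.End X)) (f : Function.End X)
    (hf : f ∈ Submonoid.closure ((Un q : Set (Function.End X)) ∪ W)) :
    QQ q s c f → f ∉ H → ∃ w ∈ W, QQ q s c w ∧ w ∉ H := by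
  induction hf using Submonoid.closure_induction_right with
  | one => exact fun _ h => absurd H.one_mem h
  | mul_right x hx y hy ih =>
    intro hQ hn
    by_cases hyH : y ∈ H
    · exact ih (QQ_left hQ (hH hyH)) fun hxH => hn (H.mul_mem hxH hyH)
    · rcases hy with hy | hy
      · exact absurd (hU hy) hyH
      · exact ⟨y, hy, QQ_right hQ, hyH⟩

/-- noninjective exactly on blocks of size `s` -/
def NI (q : X → Q) (s : ℕ) (f : Function.End X) : Prop :=
  (∀ b, ¬ Set.InjOn f (q ⁻¹' {b}) → sz q b = s) ∧ ∃ b, ¬ Set.InjOn f (q ⁻¹' {b})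

theorem NI_unique {q : X → Q} {s s' : ℕ} {f : Function.End X} (h : NI q s f) (h' : NI q s' f) :
    s = s' := by
  obtain ⟨b, hb⟩ := h.2
  rw [← h.1 b hb, ← h'.1 b hb]

theorem NI_of_QQ {q : X → Q} {s c : ℕ} {f : Function.End X} (hf : f ∈ Sig q) (h : QQ q s c f)
    (hn : f ∉ Un q) : NI q s f := by
  obtain ⟨π, hπ⟩ := hf
  obtain ⟨B, hB, hi, -⟩ := h
  constructor
  · intro b hb
    by_cases hbB : b = B
    · rw [hbB, hB]
    · exact absurd (hi b hbB) hb
  · by_contra hcon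
    push Not at hcon
    exact hn (un_of_inj hπ (inj_of_fib hπ hcon))

theorem SP_of_QQ {q : X → Q} {s : ℕ} {f : Function.End X} (hf : f ∈ Sig q)
    (h : QQ q s (s - 1) f) (hgap : ∀ b, sz q b ≠ s - 1) : f ∈ SP q := by
  obtain ⟨π, hπ⟩ := hf
  obtain ⟨B, hB, hi, hc⟩ := h
  refine ⟨π, hπ, perm_eq_of_le _ π fun b => ?_⟩
  by_cases hbB : b = B
  · have h1 : (f '' (q ⁻¹' {B})).ncard ≤ sz q (π B) :=
      Set.ncard_le_ncard (image_sub hπ B) (Set.toFinite _)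
    have := hgap (π B)
    subst hbB
    omega
  · exact sz_le_of_inj hπ b (hi b hbB)

/-! ### Existence of basic elements -/

theorem exists_inj {q : X → Q} (hq : Function.Surjective q) {A B : Q}
    (h : sz q A ≤ sz q B) :
    ∃ i : X → X, (∀ x, q x = A → q (i x) = B) ∧ Set.InjOn i (q ⁻¹' {A}) := by
  obtain ⟨b0, hb0⟩ := hq B
  have : Nonempty X := ⟨b0⟩
  have h' : (q ⁻¹' {A}).encard ≤ (q ⁻¹' {B}).encard := by
    rw [← (Set.toFinite (q ⁻¹' {A})).cast_ncard_eq, ← (Set.toFinite (q ⁻¹' {B})).cast_ncard_eq]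
    exact_mod_cast h
  obtain ⟨i, hi, hinj⟩ := (Set.toFinite (q ⁻¹' {A})).exists_injOn_of_encard_le h'
  exact ⟨i, fun x hx => hi hx, hinj⟩

theorem exists_DF {q : X → Q} (hq : Function.Surjective q) {A B : Q} (hAB : A ≠ B)
    (h : sz q A ≤ sz q B) : ∃ d, DF q A B d := by
  classical
  obtain ⟨a0, ha0⟩ := hq A
  obtain ⟨i, hi, hinj⟩ := exists_inj hq h
  have : ∃ j : X → X, (∀ x, q (j x) = A) ∧ ∀ x, q x = A → j (i x) = x := by
    have : ∀ y, ∃ z, q z = A ∧ ∀ x, q x = A → y = i x → z = x := by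
      intro y
      by_cases hy : ∃ x, q x = A ∧ y = i x
      · obtain ⟨x, hx, rfl⟩ := hy
        exact ⟨x, hx, fun x' hx' h => hinj hx hx' h⟩
      · push Not at hy
        exact ⟨a0, ha0, fun x hx h => absurd h (hy x hx)⟩
    choose j hj1 hj2 using this
    exact ⟨j, hj1, fun x hx => hj2 _ x hx rfl⟩
  obtain ⟨j, hj1, hj2⟩ := this
  refine ⟨fun x => if q x = A then i x else if q x = B then j x else x, ?_, ?_, ?_⟩
  · intro x
    by_cases h1 : q x = A
    · simp [h1, hi]
    · by_cases h2 : q x = B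
      · simp [h2, hAB.symm, hj1]
      · simp [h1, h2, Equiv.swap_apply_of_ne_of_ne]
  · intro x h1 h2
    simp [h1, h2]
  · intro x h1
    simp [h1, hi, hAB.symm, hj2]

theorem exists_unit {q : X → Q} (hq : Function.Surjective q) (π : Equiv.Perm Q)
    (h : ∀ b, sz q (π b) = sz q b) : ∃ g ∈ Un q, Over q π g := by
  choose i hi hinj using fun b => exists_inj hq (h b).ge
  have ho : Over q π (fun x => i (q x) x : Function.End X) := fun x => hi _ x rfl
  refine ⟨fun x => i (q x) x, un_of_inj ho (inj_of_fib ho fun b x hx y hy hxy => ?_), ho⟩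
  have hx : q x = b := hx
  have hy : q y = b := hy
  refine hinj b hx hy ?_
  simpa only [hx, hy] using hxy

theorem exists_inv {q : X → Q} {π : Equiv.Perm Q} {g : Function.End X} (hg : g ∈ Un q)
    (ho : Over q π g) :
    ∃ g' ∈ Un q, Over q π.symm g' ∧ (∀ x, g (g' x) = x) ∧ ∀ x, g' (g x) = x := by
  let e := Equiv.ofBijective g hg.1
  have h1 : ∀ x, g (e.symm x) = x := e.apply_symm_apply
  have h2 : ∀ x, e.symm (g x) = x := e.symm_apply_apply
  have ho' : Over q π.symm (e.symm : X → X) := fun x => by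
    rw [Equiv.eq_symm_apply, ← ho, h1]
  exact ⟨(e.symm : X → X), un_of_inj ho' e.symm.injective, ho', h1, h2⟩

theorem DF_conj {q : X → Q} {A B : Q} {π : Equiv.Perm Q} {d g g' : Function.End X}
    (hd : DF q A B d) (hg : Over q π g) (hg' : Over q π.symm g') (h1 : ∀ x, g (g' x) = x)
    (h2 : ∀ x, g' (g x) = x) : DF q (π A) (π B) (g * d * g') := by
  obtain ⟨ha, hb, hc⟩ := hd
  refine ⟨fun x => ?_, fun x hxA hxB => ?_, fun x hx => ?_⟩
  · change q (g (d (g' x))) = _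
    rw [hg, ha, hg', ← Equiv.symm_trans_swap_trans]
    rfl
  · change g (d (g' x)) = x
    rw [hb, h1]
    · rw [hg']
      exact fun h => hxA (by rw [← h, Equiv.apply_symm_apply])
    · rw [hg']
      exact fun h => hxB (by rw [← h, Equiv.apply_symm_apply])
  · change g (d (g' (g (d (g' x))))) = x
    rw [h2, hc, h1]
    rw [hg', hx, Equiv.symm_apply_apply]

/-- collapse -/
def col (x y : X) : Function.End X := Function.update id x y

theorem col_self (x y : X) : col x y x = y := Function.update_self (β := fun _ => X) x y id

theorem col_ne {x y w : X} (h : w ≠ x) : col x y w = w :=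
  Function.update_of_ne (β := fun _ => X) h y id

theorem col_conj {g g' : Function.End X} (h1 : ∀ x, g (g' x) = x)
    (h2 : ∀ x, g' (g x) = x) (x y : X) : g * col x y * g' = col (g x) (g y) := by
  funext z
  change g (col x y (g' z)) = col (g x) (g y) z
  unfold col
  by_cases h : z = g x
  · subst h; rw [h2]; simp
  · have : g' z ≠ x := fun hh => h (by rw [← hh, h1])
    simp [Function.update_of_ne, h, this, h1]

theorem swap_un {q : X → Q} {x y : X} (h : q x = q y) :
    (Equiv.swap x y : X → X) ∈ Un q := by
  refine ⟨(Equiv.swap x y).bijective, 1, fun z => ?_⟩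
  change q (Equiv.swap x y z) = q z
  rw [Equiv.swap_apply_def]
  split_ifs with h1 h2 <;> simp_all

theorem col_all {q : X → Q} (hq : Function.Surjective q) {M : Submonoid (Function.End X)}
    (hU : Un q ≤ M) {x y x' y' : X} (hxy : x ≠ y) (hq1 : q x = q y) (hxy' : x' ≠ y')
    (hq1' : q x' = q y') (hs : sz q (q x) = sz q (q x')) (hM : col x y ∈ M) : col x' y' ∈ M := by
  obtain ⟨g0, hg0, ho0⟩ := exists_unit hq (Equiv.swap (q x) (q x')) (by
    intro b
    rw [Equiv.swap_apply_def]
    split_ifs with h1 h2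
    · rw [h1, hs]
    · rw [h2, hs]
    · rfl)
  have hb0 : q (g0 x) = q x' := by rw [ho0, Equiv.swap_apply_left]
  have hb1 : q (g0 y) = q x' := by rw [ho0, ← hq1, Equiv.swap_apply_left]
  let s1 : Function.End X := (Equiv.swap (g0 x) x' : X → X)
  have hs1 : s1 ∈ Un q := swap_un hb0
  have e1 : s1 (g0 x) = x' := Equiv.swap_apply_left _ _
  have e2 : s1 (g0 y) ≠ x' := by
    rw [← e1]
    exact fun h => hxy (hg0.1.1 (hs1.1.1 h)).symm
  have e3 : q (s1 (g0 y)) = q y' := by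
    change q (Equiv.swap _ _ _) = _
    rw [Equiv.swap_apply_def]
    split_ifs with h1 h2 <;> simp_all
  let s2 : Function.End X := (Equiv.swap (s1 (g0 y)) y' : X → X)
  have hs2 : s2 ∈ Un q := swap_un e3
  have hg : s2 * s1 * g0 ∈ Un q := (Un q).mul_mem ((Un q).mul_mem hs2 hs1) hg0
  have f1 : (s2 * s1 * g0) x = x' := by
    change s2 (s1 (g0 x)) = x'
    rw [e1]
    exact Equiv.swap_apply_of_ne_of_ne e2.symm hxy'
  have f2 : (s2 * s1 * g0) y = y' := Equiv.swap_apply_left _ _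
  obtain ⟨π, hπ⟩ := hg.2
  obtain ⟨g', hg', -, h1, h2⟩ := exists_inv hg hπ
  have := col_conj h1 h2 x y
  rw [f1, f2] at this
  rw [← this]
  exact M.mul_mem (M.mul_mem (hU hg) hM) (hU hg')

theorem DF_all {q : X → Q} (hq : Function.Surjective q) {M : Submonoid (Function.End X)}
    (hU : Un q ≤ M) {A B A' B' : Q} (hA : sz q A = sz q A') (hB : sz q B = sz q B')
    (hlt : sz q A < sz q B) {d : Function.End X} (hd : DF q A B d) (hM : d ∈ M) :
    ∃ d' ∈ M, DF q A' B' d' := by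
  have hsw : ∀ C C' : Q, sz q C = sz q C' → ∀ b, sz q (Equiv.swap C C' b) = sz q b := by
    intro C C' h b
    rw [Equiv.swap_apply_def]
    split_ifs with h1 h2
    · rw [h1, h]
    · rw [h2, h]
    · rfl
  obtain ⟨g, hg, ho⟩ := exists_unit hq (Equiv.swap B B' * Equiv.swap A A') (by
    intro b
    change sz q (Equiv.swap B B' (Equiv.swap A A' b)) = _
    rw [hsw _ _ hB, hsw _ _ hA])
  obtain ⟨g', hg', ho', h1, h2⟩ := exists_inv hg ho
  refine ⟨g * d * g', M.mul_mem (M.mul_mem (hU hg) hM) (hU hg'), ?_⟩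
  have := DF_conj hd ho ho' h1 h2
  have eA : (Equiv.swap B B' * Equiv.swap A A') A = A' := by
    change Equiv.swap B B' (Equiv.swap A A' A) = A'
    rw [Equiv.swap_apply_left]
    apply Equiv.swap_apply_of_ne_of_ne <;> (rintro rfl; omega)
  have eB : (Equiv.swap B B' * Equiv.swap A A') B = B' := by
    change Equiv.swap B B' (Equiv.swap A A' B) = B'
    rw [Equiv.swap_apply_of_ne_of_ne (a := A), Equiv.swap_apply_left] <;> (rintro rfl; omega)
  rwa [eA, eB] at this

/-- `d * d` is a collapse when sizes differ by one -/
theorem DF_sq {q : X → Q} {A B : Q} {d : Function.End X} (hd : DF q A B d)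
    (hs : sz q B = sz q A + 1) : ∃ x y, x ≠ y ∧ q x = B ∧ q y = B ∧ d * d = col x y := by
  obtain ⟨ha, hb, hc⟩ := hd
  have hinj : Set.InjOn d (q ⁻¹' {A}) := fun x hx y hy hxy => by
    rw [← hc x hx, ← hc y hy, hxy]
  have hsub : d '' (q ⁻¹' {A}) ⊆ q ⁻¹' {B} := by
    have := image_sub ha A
    rwa [Equiv.swap_apply_left] at this
  have hcard : (q ⁻¹' {B} \ d '' (q ⁻¹' {A})).ncard = 1 := by
    rw [Set.ncard_sdiff hsub, hinj.ncard_image]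
    unfold sz at hs
    omega
  obtain ⟨x, hx⟩ := Set.ncard_eq_one.1 hcard
  have hxm : x ∈ q ⁻¹' {B} \ d '' (q ⁻¹' {A}) := by rw [hx]; rfl
  have hxB : q x = B := hxm.1
  have hdx : q (d x) = A := by rw [ha, hxB, Equiv.swap_apply_right]
  refine ⟨x, d (d x), ?_, hxB, ?_, ?_⟩
  · intro h
    exact hxm.2 ⟨d x, hdx, h.symm⟩
  · rw [ha, hdx, Equiv.swap_apply_left]
  · funext z
    change d (d z) = Function.update id x (d (d x)) z
    by_cases hz : z = x
    · subst hz; simp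
    · rw [Function.update_of_ne hz]
      by_cases h1 : q z = A
      · exact hc z h1
      · by_cases h2 : q z = B
        · by_cases h3 : z ∈ d '' (q ⁻¹' {A})
          · obtain ⟨a, haA, rfl⟩ := h3
            rw [hc a haA]; rfl
          · have : z ∈ q ⁻¹' {B} \ d '' (q ⁻¹' {A}) := ⟨h2, h3⟩
            rw [hx] at this
            exact absurd this hz
        · rw [hb z h1 h2, hb z h1 h2]; rfl

/-! ### Generation -/

theorem gen_SP {q : X → Q} {M : Submonoid (Function.End X)} (hU : Un q ≤ M)
    (hC : ∀ x y, x ≠ y → q x = q y → col x y ∈ M) {π : Equiv.Perm Q}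
    (hs : ∀ b, sz q (π b) = sz q b) :
    ∀ (k : ℕ) (f : Function.End X), (Set.range f)ᶜ.ncard = k → Over q π f → f ∈ M := by
  intro k
  induction k using Nat.strong_induction_on with
  | _ k ih =>
  intro f hk ho
  by_cases hinj : Function.Injective f
  · exact hU (un_of_inj ho hinj)
  · have : ∃ x y, f x = f y ∧ x ≠ y := by
      simpa [Function.Injective] using hinj
    obtain ⟨x, y, hf, hxy⟩ := this
    have hqxy : q x = q y := π.injective (by rw [← ho, ← ho, hf])
    have hnot : ¬ (q ⁻¹' {π (q x)} ⊆ f '' (q ⁻¹' {q x})) := by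
      intro hsub
      have h1 := Set.ncard_le_ncard hsub (Set.toFinite _)
      have h2 := hs (q x)
      unfold sz at h2
      rw [h2] at h1
      have h3 := (Set.ncard_image_iff (Set.toFinite (q ⁻¹' {q x}))).1
        (le_antisymm (Set.ncard_image_le (Set.toFinite _)) h1)
      exact hxy (h3 rfl hqxy.symm hf)
    obtain ⟨z, hz, hzn⟩ := Set.not_subset.1 hnot
    have hz : q z = π (q x) := hz
    have hzr : z ∉ Set.range f := by
      rintro ⟨w, rfl⟩
      refine hzn ⟨w, ?_, rfl⟩
      rw [ho] at hz
      exact π.injective hz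
    obtain ⟨f', hx', hne'⟩ : ∃ f' : Function.End X, f' x = z ∧ ∀ w, w ≠ x → f' w = f w :=
      ⟨fun w => if w = x then z else f w, if_pos rfl, fun w hw => if_neg hw⟩
    have hf' : f = f' * col x y := by
      funext w
      change f w = f' (col x y w)
      by_cases hw : w = x
      · rw [hw, col_self, hne' y hxy.symm, hf]
      · rw [col_ne hw, hne' w hw]
    have ho' : Over q π f' := by
      intro w
      by_cases hw : w = x
      · rw [hw, hx', hz]
      · rw [hne' w hw, ho]
    have hlt : (Set.range f')ᶜ.ncard < k := by
      rw [← hk]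
      apply Set.ncard_lt_ncard _ (Set.toFinite _)
      rw [Set.ssubset_def]
      constructor
      · rw [Set.compl_subset_compl]
        rintro _ ⟨w, rfl⟩
        by_cases hw : w = x
        · exact ⟨y, by rw [hne' y hxy.symm, hw, hf]⟩
        · exact ⟨w, hne' w hw⟩
      · intro h
        exact h hzr ⟨x, hx'⟩
    rw [hf']
    exact M.mul_mem (ih _ hlt f' rfl ho') (hC x y hxy hqxy)

/-- the measure used for sorting -/
noncomputable def mu (q : X → Q) (π : Equiv.Perm Q) : ℕ := ∑ b, sz q b * sz q (π b)

theorem mu_lt {q : X → Q} {π : Equiv.Perm Q} {A B : Q} (h1 : sz q A < sz q B)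
    (h2 : sz q (π B) < sz q (π A)) : mu q π < mu q (π * Equiv.swap A B) := by
  have hAB : A ≠ B := by rintro rfl; omega
  have hB : B ∈ (Finset.univ : Finset Q).erase A := by simp [hAB.symm]
  unfold mu
  rw [← Finset.add_sum_erase _ _ (Finset.mem_univ A), ← Finset.add_sum_erase _ _ hB,
    ← Finset.add_sum_erase (a := A) _ (fun b => sz q b * sz q ((π * Equiv.swap A B) b))
      (Finset.mem_univ A),
    ← Finset.add_sum_erase _ (fun b => sz q b * sz q ((π * Equiv.swap A B) b)) hB]
  have : ∑ b ∈ (Finset.univ.erase A).erase B, sz q b * sz q ((π * Equiv.swap A B) b) =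
      ∑ b ∈ (Finset.univ.erase A).erase B, sz q b * sz q (π b) := by
    apply Finset.sum_congr rfl
    intro b hb
    simp only [Finset.mem_erase, Finset.mem_univ, and_true] at hb
    rw [Equiv.Perm.mul_apply, Equiv.swap_apply_of_ne_of_ne hb.2 hb.1]
  rw [this]
  simp only [Equiv.Perm.mul_apply, Equiv.swap_apply_left, Equiv.swap_apply_right]
  nlinarith

theorem exists_pair {q : X → Q} {π : Equiv.Perm Q} (h : ¬ ∀ b, sz q (π b) = sz q b) :
    ∃ A B, sz q A < sz q B ∧ (∀ c, ¬ (sz q A < sz q c ∧ sz q c < sz q B)) ∧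
      sz q (π B) ≤ sz q A ∧ sz q (π B) < sz q (π A) := by
  -- the existence of a not necessarily adjacent pair
  have h0 : ∃ p : Q × Q, sz q p.1 < sz q p.2 ∧ sz q (π p.2) ≤ sz q p.1 ∧
      sz q (π p.2) < sz q (π p.1) := by
    have hdesc : ∃ B, sz q (π B) < sz q B := by
      by_contra hcon
      push Not at hcon
      exact h (perm_eq_of_le _ π hcon)
    obtain ⟨B, hB, hmin⟩ := Set.exists_min_image {B | sz q (π B) < sz q B}
      (fun B => sz q (π B)) (Set.toFinite _) hdesc
    have hB : sz q (π B) < sz q B := hB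
    have : ∃ A, sz q A = sz q (π B) ∧ sz q (π A) ≠ sz q (π B) := by
      by_contra hcon
      push Not at hcon
      have hmt : Set.MapsTo π {A | sz q A = sz q (π B)} {A | sz q A = sz q (π B)} := hcon
      have hsurj : Set.SurjOn π {A | sz q A = sz q (π B)} {A | sz q A = sz q (π B)} :=
        ((Set.toFinite _).surjOn_iff_bijOn_of_mapsTo hmt).2
          (((Set.toFinite _).injOn_iff_bijOn_of_mapsTo hmt).1 π.injective.injOn)
      obtain ⟨C, hC, hCB⟩ := hsurj (show π B ∈ _ from rfl)
      rw [π.injective hCB] at hC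
      have hC : sz q B = sz q (π B) := hC
      omega
    obtain ⟨A, hA, hA'⟩ := this
    refine ⟨(A, B), ?_, hA.ge, ?_⟩
    · change sz q A < sz q B
      omega
    · change sz q (π B) < sz q (π A)
      by_contra hcon
      have := hmin A (show sz q (π A) < sz q A by omega)
      omega
  obtain ⟨⟨A, B⟩, ⟨h1, h2, h3⟩, hmin⟩ := Set.exists_min_image
    {p : Q × Q | sz q p.1 < sz q p.2 ∧ sz q (π p.2) ≤ sz q p.1 ∧
      sz q (π p.2) < sz q (π p.1)} (fun p => sz q p.2 - sz q p.1) (Set.toFinite _) h0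
  simp only at h1 h2 h3
  refine ⟨A, B, h1, ?_, h2, h3⟩
  rintro C ⟨hAC, hCB⟩
  by_cases hc : sz q (π B) < sz q (π C)
  · have := hmin (C, B) ⟨hCB, by simp only; omega, hc⟩
    simp only at this
    omega
  · have := hmin (A, C) ⟨hAC, by simp only; omega, by simp only; omega⟩
    simp only at this
    omega

theorem gen_all {q : X → Q} (hq : Function.Surjective q) {M : Submonoid (Function.End X)}
    (hU : Un q ≤ M) (hC : ∀ x y, x ≠ y → q x = q y → col x y ∈ M)
    (hD : ∀ A B, sz q A < sz q B → (∀ c, ¬ (sz q A < sz q c ∧ sz q c < sz q B)) →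
      ∃ d ∈ M, DF q A B d) : Sig q ≤ M := by
  have hwf : WellFounded (fun π ρ : Equiv.Perm Q => mu q ρ < mu q π) := by
    have : IsTrans (Equiv.Perm Q) (fun π ρ => mu q ρ < mu q π) :=
      ⟨fun _ _ _ h1 h2 => lt_trans h2 h1⟩
    have : Std.Irrefl (fun π ρ : Equiv.Perm Q => mu q ρ < mu q π) := ⟨fun _ => lt_irrefl _⟩
    exact Finite.wellFounded_of_trans_of_irrefl _
  suffices H : ∀ (π : Equiv.Perm Q) (f : Function.End X), Over q π f → f ∈ M by
    rintro f ⟨π, hf⟩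
    exact H π f hf
  intro π
  induction π using hwf.induction with
  | _ π ih =>
  intro f ho
  by_cases hs : ∀ b, sz q (π b) = sz q b
  · exact gen_SP hU hC hs _ f rfl ho
  obtain ⟨A, B, h1, hadj, h2, h3⟩ := exists_pair hs
  have hAB : A ≠ B := by rintro rfl; omega
  obtain ⟨d, hdM, hd1, hd2, hd3⟩ := hD A B h1 hadj
  -- a surjection from block A onto block π B
  have hσ : ∃ σ : X → X, (∀ x, q (σ x) = π B) ∧ ∀ y, q y = π B → ∃ x, q x = A ∧ σ x = y := by
    obtain ⟨i, hi, hinj⟩ := exists_inj hq h2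
    obtain ⟨y0, hy0⟩ := hq (π B)
    have : ∀ x, ∃ y, q y = π B ∧ ∀ z, q z = π B → i z = x → y = z := by
      intro x
      by_cases hx : ∃ z, q z = π B ∧ i z = x
      · obtain ⟨z, hz, rfl⟩ := hx
        exact ⟨z, hz, fun z' hz' h => hinj hz hz' h.symm⟩
      · push Not at hx
        exact ⟨y0, hy0, fun z hz h => absurd h (hx z hz)⟩
    choose σ hσ1 hσ2 using this
    exact ⟨σ, hσ1, fun y hy => ⟨i y, hi y hy, hσ2 _ y hy rfl⟩⟩
  obtain ⟨σ, hσ1, hσ2⟩ := hσ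
  let f' : Function.End X := fun x => if q x = A then σ x else if q x = B then f (d x) else f x
  have hf' : Over q (π * Equiv.swap A B) f' := by
    intro x
    change q (if q x = A then σ x else if q x = B then f (d x) else f x) = π (Equiv.swap A B (q x))
    by_cases hA : q x = A
    · rw [if_pos hA, hσ1, hA, Equiv.swap_apply_left]
    · rw [if_neg hA]
      by_cases hB : q x = B
      · rw [if_pos hB, ho, hd1]
      · rw [if_neg hB, ho, Equiv.swap_apply_of_ne_of_ne hA hB]
  have hv : ∀ x, ∃ y, q y = q x ∧ f' (d y) = f x := by
    intro x
    by_cases hB : q x = B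
    · obtain ⟨a, ha, hax⟩ := hσ2 (f x) (by rw [ho, hB])
      refine ⟨d a, by rw [hd1, ha, Equiv.swap_apply_left, hB], ?_⟩
      rw [hd3 a ha]
      change (if q a = A then σ a else if q a = B then f (d a) else f a) = _
      rw [if_pos ha, hax]
    · refine ⟨x, rfl, ?_⟩
      change (if q (d x) = A then σ (d x) else if q (d x) = B then f (d (d x)) else f (d x)) = _
      by_cases hA : q x = A
      · have : q (d x) = B := by rw [hd1, hA, Equiv.swap_apply_left]
        rw [if_neg (by rw [this]; exact hAB.symm), if_pos this, hd3 x hA]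
      · rw [hd2 x hA hB, if_neg hA, if_neg hB]
  choose v hv1 hv2 using hv
  change Function.End X at v
  have hvM : v ∈ M := gen_SP (π := 1) hU hC (fun _ => rfl) _ v rfl hv1
  have : f = f' * d * v := by
    funext x
    exact (hv2 x).symm
  rw [this]
  exact M.mul_mem (M.mul_mem (ih _ (mu_lt h1 h3) f' hf') hdM) hvM

theorem col_over {q : X → Q} {x y : X} (h : q x = q y) : Over q 1 (col x y) := by
  intro w
  by_cases hw : w = x
  · rw [hw, col_self, ← h]; rfl
  · rw [col_ne hw]; rfl

theorem QQ_col {q : X → Q} {x y : X} :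
    QQ q (sz q (q x)) (sz q (q x) - 1) (col x y) := by
  refine ⟨q x, rfl, fun b hb u hu v hv huv => ?_, ?_⟩
  · have hu : q u = b := hu
    have hv : q v = b := hv
    rwa [col_ne (by rintro rfl; exact hb hu.symm), col_ne (by rintro rfl; exact hb hv.symm)] at huv
  · have h1 : (q ⁻¹' {q x} \ {x}).ncard = sz q (q x) - 1 :=
      Set.ncard_sdiff_singleton_of_mem (rfl : x ∈ q ⁻¹' {q x})
    rw [← h1]
    refine Set.ncard_le_ncard ?_ (Set.toFinite _)
    rintro w ⟨hw, hwx⟩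
    exact ⟨w, hw, col_ne hwx⟩

theorem col_not_un {q : X → Q} {x y : X} (h : x ≠ y) : col x y ∉ Un q := by
  intro hu
  apply h
  apply hu.1.1
  rw [col_self, col_ne h.symm]

theorem QQ_DF {q : X → Q} {A B : Q} {d : Function.End X} (hd : DF q A B d) :
    QQ q (sz q B) 0 d := by
  obtain ⟨h1, h2, h3⟩ := hd
  refine ⟨B, rfl, fun b hb u hu v hv huv => ?_, Nat.zero_le _⟩
  have hu : q u = b := hu
  have hv : q v = b := hv
  by_cases hA : b = A
  · rw [← h3 u (hu.trans hA), ← h3 v (hv.trans hA), huv]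
  · rwa [h2 u (by rwa [hu]) (by rwa [hu]), h2 v (by rwa [hv]) (by rwa [hv])] at huv

theorem DF_not_sp {q : X → Q} (hq : Function.Surjective q) {A B : Q} {d : Function.End X}
    (hd : DF q A B d) (h : sz q A ≠ sz q B) : d ∉ SP q := by
  rintro ⟨π, ho, hs⟩
  have := hs B
  rw [over_unique hq ho hd.1, Equiv.swap_apply_right] at this
  exact h this

/-- the set of block sizes -/
noncomputable def sizes (q : X → Q) : Finset ℕ := Finset.univ.image (sz q)

/-- the gap sizes -/
noncomputable def gaps (q : X → Q) : Finset ℕ :=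
  (sizes q).filter fun s => 2 ≤ s ∧ s - 1 ∉ sizes q

open Classical in
/-- the non minimal sizes -/
noncomputable def nonmin (q : X → Q) : Finset ℕ :=
  (sizes q).filter fun s => ∃ A, sz q A < s

theorem mem_sizes {q : X → Q} {s : ℕ} : s ∈ sizes q ↔ ∃ b, sz q b = s := by
  simp [sizes]

theorem card_nonmin [Nonempty Q] (q : X → Q) : (nonmin q).card = (sizes q).card - 1 := by
  have hne : (sizes q).Nonempty := by
    obtain ⟨b⟩ := ‹Nonempty Q›
    exact ⟨_, mem_sizes.2 ⟨b, rfl⟩⟩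
  have : nonmin q = (sizes q).erase ((sizes q).min' hne) := by
    ext s
    simp only [nonmin, Finset.mem_filter, Finset.mem_erase]
    constructor
    · rintro ⟨hs, A, hA⟩
      refine ⟨fun h => ?_, hs⟩
      have := (sizes q).min'_le _ (mem_sizes.2 ⟨A, rfl⟩)
      omega
    · rintro ⟨hs, hs'⟩
      obtain ⟨A, hA⟩ := mem_sizes.1 ((sizes q).min'_mem hne)
      have := (sizes q).min'_le _ hs'
      exact ⟨hs', A, by omega⟩
  rw [this, Finset.card_erase_of_mem ((sizes q).min'_mem hne)]

theorem lower {q : X → Q} (hq : Function.Surjective q) (W : Set (Function.End X))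
    (hW : W ⊆ Sig q) (hfin : W.Finite)
    (hgen : Submonoid.closure ((Un q : Set (Function.End X)) ∪ W) = Sig q) :
    (nonmin q).card + (gaps q).card ≤ W.ncard := by
  classical
  have h1 : ∀ s ∈ nonmin q, ∃ w ∈ W, w ∉ SP q ∧ NI q s w := by
    intro s hs
    obtain ⟨hs, A, hA⟩ := Finset.mem_filter.1 hs
    obtain ⟨B, rfl⟩ := mem_sizes.1 hs
    obtain ⟨d, hd⟩ := exists_DF hq (A := A) (B := B) (by rintro rfl; omega) hA.le
    obtain ⟨w, hwW, hwQ, hwS⟩ := exists_gen (SP q) le_rfl (un_le_sp q) W d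
      (by rw [hgen]; exact ⟨_, hd.1⟩) (QQ_DF hd) (DF_not_sp hq hd hA.ne)
    exact ⟨w, hwW, hwS, NI_of_QQ (hW hwW) hwQ fun h => hwS (un_le_sp q h)⟩
  have h2 : ∀ s ∈ gaps q, ∃ w ∈ W, w ∈ SP q ∧ NI q s w := by
    intro s hs
    obtain ⟨hs, hs2, hgap⟩ := Finset.mem_filter.1 hs
    obtain ⟨B, rfl⟩ := mem_sizes.1 hs
    obtain ⟨x, hx, y, hy, hxy⟩ := (Set.one_lt_ncard (Set.toFinite (q ⁻¹' {B}))).1 hs2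
    have hx : q x = B := hx
    have hy : q y = B := hy
    obtain ⟨w, hwW, hwQ, hwS⟩ := exists_gen (Un q) (un_le_sp q) le_rfl W (col x y)
      (by rw [hgen]; exact ⟨_, col_over (hx.trans hy.symm)⟩) QQ_col (col_not_un hxy)
    rw [hx] at hwQ
    exact ⟨w, hwW, SP_of_QQ (hW hwW) hwQ fun b hb => hgap (mem_sizes.2 ⟨b, hb⟩),
      NI_of_QQ (hW hwW) hwQ hwS⟩
  choose! φ hφ1 hφ2 hφ3 using h1
  choose! ψ hψ1 hψ2 hψ3 using h2
  have hi1 : Set.InjOn φ (nonmin q : Set ℕ) := fun s hs s' hs' h =>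
    NI_unique (hφ3 s hs) (h ▸ hφ3 s' hs')
  have hi2 : Set.InjOn ψ (gaps q : Set ℕ) := fun s hs s' hs' h =>
    NI_unique (hψ3 s hs) (h ▸ hψ3 s' hs')
  have hdisj : Disjoint ((nonmin q).image φ) ((gaps q).image ψ) := by
    rw [Finset.disjoint_left]
    intro w hw hw'
    obtain ⟨s, hs, rfl⟩ := Finset.mem_image.1 hw
    obtain ⟨s', hs', h⟩ := Finset.mem_image.1 hw'
    exact hφ2 s hs (h ▸ hψ2 s' hs')
  rw [← Finset.card_image_of_injOn hi1, ← Finset.card_image_of_injOn hi2,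
    ← Finset.card_union_of_disjoint hdisj, ← Set.ncard_coe_finset]
  refine Set.ncard_le_ncard ?_ hfin
  intro w hw
  rcases Finset.mem_union.1 (Finset.mem_coe.1 hw) with hw | hw
  · obtain ⟨s, hs, rfl⟩ := Finset.mem_image.1 hw
    exact hφ1 s hs
  · obtain ⟨s, hs, rfl⟩ := Finset.mem_image.1 hw
    exact hψ1 s hs

theorem upper {q : X → Q} (hq : Function.Surjective q) :
    ∃ W : Set (Function.End X), W ⊆ Sig q ∧ W.Finite ∧
      W.ncard ≤ (nonmin q).card + (gaps q).card ∧
      Submonoid.closure ((Un q : Set (Function.End X)) ∪ W) = Sig q := by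
  classical
  have h1 : ∀ s ∈ nonmin q, ∃ d, ∃ A B, sz q B = s ∧ sz q A < s ∧
      (∀ c, ¬ (sz q A < sz q c ∧ sz q c < s)) ∧ DF q A B d := by
    intro s hs
    obtain ⟨hs, hA⟩ := Finset.mem_filter.1 hs
    obtain ⟨B, rfl⟩ := mem_sizes.1 hs
    obtain ⟨A, hA, hmax⟩ := Set.exists_max_image {A | sz q A < sz q B} (sz q) (Set.toFinite _) hA
    have hA : sz q A < sz q B := hA
    obtain ⟨d, hd⟩ := exists_DF hq (A := A) (B := B) (by rintro rfl; omega) hA.le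
    refine ⟨d, A, B, rfl, hA, ?_, hd⟩
    rintro c ⟨hc1, hc2⟩
    have := hmax c hc2
    omega
  have h2 : ∀ s ∈ gaps q, ∃ e : Function.End X, ∃ x y, x ≠ y ∧ q x = q y ∧ sz q (q x) = s ∧
      e = col x y := by
    intro s hs
    obtain ⟨hs, hs2, hgap⟩ := Finset.mem_filter.1 hs
    obtain ⟨B, rfl⟩ := mem_sizes.1 hs
    obtain ⟨x, hx, y, hy, hxy⟩ := (Set.one_lt_ncard (Set.toFinite (q ⁻¹' {B}))).1 hs2
    have hx : q x = B := hx
    have hy : q y = B := hy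
    exact ⟨_, x, y, hxy, hx.trans hy.symm, by rw [hx], rfl⟩
  choose! φ hφ using h1
  choose! ψ hψ using h2
  let F : Finset (Function.End X) := (nonmin q).image φ ∪ (gaps q).image ψ
  have hF : (F : Set (Function.End X)) ⊆ Sig q := by
    intro w hw
    rcases Finset.mem_union.1 (Finset.mem_coe.1 hw) with hw | hw
    · obtain ⟨s, hs, rfl⟩ := Finset.mem_image.1 hw
      obtain ⟨A, B, -, -, -, hd⟩ := hφ s hs
      exact ⟨_, hd.1⟩
    · obtain ⟨s, hs, rfl⟩ := Finset.mem_image.1 hw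
      obtain ⟨x, y, -, hxy, -, he⟩ := hψ s hs
      rw [he]
      exact ⟨_, col_over hxy⟩
  refine ⟨F, hF, F.finite_toSet, ?_, le_antisymm ?_ ?_⟩
  · rw [Set.ncard_coe_finset]
    refine (Finset.card_union_le _ _).trans ?_
    exact add_le_add Finset.card_image_le Finset.card_image_le
  · rw [Submonoid.closure_le]
    exact Set.union_subset (fun f hf => sp_le_sig q (un_le_sp q hf)) hF
  · set M := Submonoid.closure ((Un q : Set (Function.End X)) ∪ F) with hM
    have hU : Un q ≤ M := fun f hf => Submonoid.subset_closure (Or.inl hf)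
    have hFM : ∀ f ∈ F, f ∈ M := fun f hf => Submonoid.subset_closure (Or.inr hf)
    have hφM : ∀ s ∈ nonmin q, φ s ∈ M := fun s hs =>
      hFM _ (Finset.mem_union_left _ (Finset.mem_image_of_mem _ hs))
    have hψM : ∀ s ∈ gaps q, ψ s ∈ M := fun s hs =>
      hFM _ (Finset.mem_union_right _ (Finset.mem_image_of_mem _ hs))
    refine gen_all hq hU ?_ ?_
    · intro x y hxy hqxy
      have hs2 : 2 ≤ sz q (q x) :=
        (Set.one_lt_ncard (Set.toFinite (q ⁻¹' {q x}))).2 ⟨x, rfl, y, hqxy.symm, hxy⟩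
      have hsm : sz q (q x) ∈ sizes q := mem_sizes.2 ⟨_, rfl⟩
      by_cases hg : sz q (q x) - 1 ∈ sizes q
      · obtain ⟨C, hC⟩ := mem_sizes.1 hg
        have hsn : sz q (q x) ∈ nonmin q := Finset.mem_filter.2 ⟨hsm, C, by omega⟩
        obtain ⟨A, B, hB, hA, hadj, hd⟩ := hφ _ hsn
        have := hadj C
        obtain ⟨u, v, huv, hu, hv, hdd⟩ := DF_sq hd (by omega)
        refine col_all hq hU huv (hu.trans hv.symm) hxy hqxy (by rw [hu, hB]) ?_
        rw [← hdd]
        exact M.mul_mem (hφM _ hsn) (hφM _ hsn)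
      · have hsg : sz q (q x) ∈ gaps q := Finset.mem_filter.2 ⟨hsm, hs2, hg⟩
        obtain ⟨u, v, huv, hquv, hs, he⟩ := hψ _ hsg
        refine col_all hq hU huv hquv hxy hqxy hs ?_
        rw [← he]
        exact hψM _ hsg
    · intro A B hlt hadj
      have hsn : sz q B ∈ nonmin q :=
        Finset.mem_filter.2 ⟨mem_sizes.2 ⟨_, rfl⟩, A, hlt⟩
      obtain ⟨A', B', hB', hA', hadj', hd⟩ := hφ _ hsn
      have e1 := hadj A'
      have e2 := hadj' A
      exact DF_all hq hU (by omega) hB' (by omega) hd (hφM _ hsn)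

end RelRankAux

namespace RelRankAux

theorem sig_eq {X : Type*} [Fintype X] (r : Setoid X) :
    SigmaSet r = (Sig (Quotient.mk r) : Set (Function.End X)) := by
  ext f
  constructor
  · rintro ⟨hT, hB⟩
    let φ : Quotient r → Quotient r := Quotient.map f hT
    have hs : Function.Surjective φ := by
      intro b
      induction b using Quotient.inductionOn with
      | _ y =>
      obtain ⟨_, ⟨x, rfl⟩, hx⟩ := hB {z | r z y} (Setoid.mem_classes r y)
      exact ⟨Quotient.mk r x, Quotient.sound hx⟩
    exact ⟨Equiv.ofBijective φ (Finite.surjective_iff_bijective.1 hs), fun x => rfl⟩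
  · rintro ⟨π, hπ⟩
    constructor
    · intro x y hxy
      refine Quotient.exact ?_
      rw [hπ, hπ, Quotient.sound hxy]
    · rintro B ⟨y, rfl⟩
      obtain ⟨x, hx⟩ := Quotient.exists_rep (π.symm (Quotient.mk r y))
      refine ⟨f x, ⟨x, rfl⟩, Quotient.exact ?_⟩
      rw [hπ]
      exact (congrArg π hx).trans (π.apply_symm_apply _)

theorem un_eq {X : Type*} [Fintype X] (r : Setoid X) :
    SXP r = (Un (Quotient.mk r) : Set (Function.End X)) := by
  ext f
  constructor
  · rintro ⟨hb, hr⟩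
    refine ⟨hb, ?_⟩
    change f ∈ (Sig (Quotient.mk r) : Set (Function.End X))
    rw [← sig_eq]
    refine ⟨fun x y h => (hr x y).2 h, ?_⟩
    rintro B ⟨y, rfl⟩
    exact ⟨y, hb.2 y, r.refl y⟩
  · rintro ⟨hb, π, hπ⟩
    refine ⟨hb, fun x y => ?_⟩
    have h1 : r (f x) (f y) ↔ Quotient.mk r (f x) = Quotient.mk r (f y) := Quotient.eq.symm
    have h2 : r x y ↔ Quotient.mk r x = Quotient.mk r y := Quotient.eq.symm
    rw [h1, h2, hπ, hπ, π.injective.eq_iff]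

theorem blockCount_ne_zero {X : Type*} [Fintype X] (r : Setoid X) (s : ℕ) :
    blockCount r s ≠ 0 ↔ ∃ b, sz (Quotient.mk r) b = s := by
  have key : ∀ y : X, Quotient.mk r ⁻¹' {Quotient.mk r y} = {z | r z y} := by
    intro y
    ext z
    exact Quotient.eq
  unfold blockCount
  rw [← Nat.pos_iff_ne_zero, Set.ncard_pos (Set.toFinite _)]
  constructor
  · rintro ⟨_, ⟨y, rfl⟩, h⟩
    refine ⟨Quotient.mk r y, ?_⟩
    unfold sz
    rw [key, h]
  · rintro ⟨b, hb⟩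
    obtain ⟨y, rfl⟩ := Quotient.exists_rep b
    refine ⟨{z | r z y}, Setoid.mem_classes r y, ?_⟩
    unfold sz at hb
    rwa [← key]

end RelRankAux

/-- The relative rank of `Σ(X,P)` modulo `S(X,P)` equals
`p + q + g'(t) − 1 + l`, where `l` is the number of integers `s ≥ 2` such that
the partition has a block of size `s` but no block of size `s − 1`. -/
theorem relRank_SigmaXP_SXP {X : Type*} [Fintype X] [Nonempty X] (r : Setoid X)
    (p q t : ℕ) (n m : Fin p → ℕ) (l : Fin q → ℕ)
    (hn2 : ∀ i, 2 ≤ n i) (hm2 : ∀ i, 2 ≤ m i) (hl2 : ∀ j, 2 ≤ l j)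
    (hninj : Function.Injective n) (hlinj : Function.Injective l)
    (hnl : ∀ i j, n i ≠ l j)
    (hcn : ∀ i, blockCount r (n i) = m i)
    (hcl : ∀ j, blockCount r (l j) = 1)
    (hct : blockCount r 1 = t)
    (hcover : ∀ s, 2 ≤ s → blockCount r s ≠ 0 → (∃ i, s = n i) ∨ (∃ j, s = l j))
    : relRank (SigmaSet r) (SXP r) =
        p + q + gg' t - 1 +
          {s : ℕ | 2 ≤ s ∧ blockCount r s ≠ 0 ∧ blockCount r (s - 1) = 0}.ncard := by
  classical
  let _ : Fintype (Quotient r) := Fintype.ofFinite _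
  have hq : Function.Surjective (Quotient.mk r) := Quotient.exists_rep
  have hmem : ∀ s, s ∈ RelRankAux.sizes (Quotient.mk r) ↔ blockCount r s ≠ 0 := fun s => by
    rw [RelRankAux.mem_sizes, RelRankAux.blockCount_ne_zero]
  have hNe : Nonempty (Quotient r) := ‹Nonempty X›.map (Quotient.mk r)
  have hgap : {s : ℕ | 2 ≤ s ∧ blockCount r s ≠ 0 ∧ blockCount r (s - 1) = 0} =
      (RelRankAux.gaps (Quotient.mk r) : Set ℕ) := by
    ext s
    simp only [Set.mem_ofPred_eq, RelRankAux.gaps, Finset.coe_filter, hmem, not_not]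
    tauto
  have hcard : (RelRankAux.sizes (Quotient.mk r)).card = p + q + gg' t := by
    have hsz : RelRankAux.sizes (Quotient.mk r) =
        (Finset.univ.image n ∪ Finset.univ.image l) ∪ (if 1 ≤ t then {1} else ∅) := by
      ext s
      rw [hmem]
      simp only [Finset.mem_union, Finset.mem_image, Finset.mem_univ, true_and]
      constructor
      · intro hs
        have hpos : 0 < s := by
          obtain ⟨b, rfl⟩ := (RelRankAux.blockCount_ne_zero r s).1 hs
          exact RelRankAux.sz_pos hq b
        by_cases h2 : 2 ≤ s
        · rcases hcover s h2 hs with ⟨i, rfl⟩ | ⟨j, rfl⟩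
          · exact Or.inl (Or.inl ⟨i, rfl⟩)
          · exact Or.inl (Or.inr ⟨j, rfl⟩)
        · have : s = 1 := by omega
          subst this
          right
          rw [if_pos (by omega)]
          simp
      · rintro ((⟨i, rfl⟩ | ⟨j, rfl⟩) | h)
        · have := hm2 i
          rw [hcn]; omega
        · rw [hcl]; omega
        · split_ifs at h with ht
          · rw [Finset.mem_singleton.1 h, hct]; omega
          · simp at h
    rw [hsz, Finset.card_union_of_disjoint, Finset.card_union_of_disjoint,
      Finset.card_image_of_injective _ hninj, Finset.card_image_of_injective _ hlinj]
    · simp only [Finset.card_univ, Fintype.card_fin]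
      congr 1
      unfold gg'
      split_ifs <;> rfl
    · rw [Finset.disjoint_left]
      intro s hs hs'
      obtain ⟨i, -, rfl⟩ := Finset.mem_image.1 hs
      obtain ⟨j, -, h⟩ := Finset.mem_image.1 hs'
      exact hnl i j h.symm
    · rw [Finset.disjoint_left]
      intro s hs hs'
      have h1 : s = 1 := by
        split_ifs at hs' with ht
        · exact Finset.mem_singleton.1 hs'
        · simp at hs'
      rcases Finset.mem_union.1 hs with h | h
      · obtain ⟨i, -, h⟩ := Finset.mem_image.1 h
        have := hn2 i
        omega
      · obtain ⟨j, -, h⟩ := Finset.mem_image.1 h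
        have := hl2 j
        omega
  rw [hgap, Set.ncard_coe_finset, ← hcard, ← RelRankAux.card_nonmin]
  unfold relRank
  rw [RelRankAux.sig_eq, RelRankAux.un_eq]
  apply le_antisymm
  · obtain ⟨W, h1, h2, h3, h4⟩ := RelRankAux.upper hq
    refine le_trans (Nat.sInf_le ?_) h3
    exact ⟨W, h1, h2, rfl, by rw [h4]⟩
  · apply le_csInf
    · obtain ⟨W, h1, h2, h3, h4⟩ := RelRankAux.upper hq
      exact ⟨_, W, h1, h2, rfl, by rw [h4]⟩
    · rintro _ ⟨W, h1, h2, rfl, h4⟩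
      exact RelRankAux.lower hq W h1 h2 (SetLike.coe_injective h4)
end
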